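/- arXiv:2602.06361 — 3 statements merged into one kernel-verified Lean document; each statement's English description precedes it below -/
import Mathlib

section
/- Let μ^a, μ^b ∈ [0,1]^m be utility profiles and Δ > 0 satisfy OptEnvy ≤ −Δ. Then for every real c > 0, it holds that ∑_{i=1}^m |c μ^a_i − μ^b_i| ≥ (1+c)Δ. -/
open scoped Classical

noncomputable section

def envyAB {m : ℕ} (μa : Fin m → ℝ) (A : Finset (Fin m)) : ℝ :=
  ∑ i ∈ Aᶜ, μa i - ∑ i ∈ A, μa i

def envyBA {m : ℕ} (μb : Fin m → ℝ) (A : Finset (Fin m)) : ℝ :=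
  ∑ i ∈ A, μb i - ∑ i ∈ Aᶜ, μb i

def envy {m : ℕ} (μa μb : Fin m → ℝ) (A : Finset (Fin m)) : ℝ :=
  max (envyAB μa A) (envyBA μb A)

def optEnvy {m : ℕ} (μa μb : Fin m → ℝ) : ℝ :=
  ⨅ A : Finset (Fin m), envy μa μb A

/-!
For an allocation with `A_a = A`, the combination `-(c * Envy_{a→b} + Envy_{b→a})` is the sum of
the numbers `c * μ^a_i - μ^b_i` signed `+` on `A` and `-` off `A`, so it is at most
`∑ i, |c * μ^a_i - μ^b_i|`. It is also at least `(1 + c) * (-Envy)`, and the minimal envy is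
attained.
-/

theorem sum_sub_sum_compl_le_sum_abs {ι M : Type*} [Fintype ι] [DecidableEq ι]
    [AddCommGroup M] [LinearOrder M] [IsOrderedAddMonoid M] (f : ι → M) (A : Finset ι) :
    ∑ i ∈ A, f i - ∑ i ∈ Aᶜ, f i ≤ ∑ i, |f i| :=
  calc
    ∑ i ∈ A, f i - ∑ i ∈ Aᶜ, f i = ∑ i ∈ A, f i + ∑ i ∈ Aᶜ, -f i := by
      rw [Finset.sum_neg_distrib, sub_eq_add_neg]
    _ ≤ ∑ i ∈ A, |f i| + ∑ i ∈ Aᶜ, |f i| :=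
      add_le_add (Finset.sum_le_sum fun i _ => le_abs_self (f i))
        (Finset.sum_le_sum fun i _ => neg_le_abs (f i))
    _ = ∑ i, |f i| := Finset.sum_add_sum_compl A _

section Envy

variable {m : ℕ} (μa μb : Fin m → ℝ)

theorem neg_mul_envyAB_add_envyBA (c : ℝ) (A : Finset (Fin m)) :
    -(c * envyAB μa A + envyBA μb A) =
      ∑ i ∈ A, (c * μa i - μb i) - ∑ i ∈ Aᶜ, (c * μa i - μb i) := by
  simp only [envyAB, envyBA, Finset.sum_sub_distrib, ← Finset.mul_sum]
  ring

theorem mul_envyAB_add_envyBA_le_one_add_mul_envy {c : ℝ} (hc : 0 ≤ c) (A : Finset (Fin m)) :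
    c * envyAB μa A + envyBA μb A ≤ (1 + c) * envy μa μb A :=
  calc
    c * envyAB μa A + envyBA μb A ≤ c * envy μa μb A + envy μa μb A :=
      add_le_add (mul_le_mul_of_nonneg_left (le_max_left _ _) hc) (le_max_right _ _)
    _ = (1 + c) * envy μa μb A := by ring

theorem neg_one_add_mul_envy_le_sum_abs {c : ℝ} (hc : 0 ≤ c) (A : Finset (Fin m)) :
    -((1 + c) * envy μa μb A) ≤ ∑ i, |c * μa i - μb i| :=
  calc
    -((1 + c) * envy μa μb A) ≤ -(c * envyAB μa A + envyBA μb A) :=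
      neg_le_neg (mul_envyAB_add_envyBA_le_one_add_mul_envy μa μb hc A)
    _ = ∑ i ∈ A, (c * μa i - μb i) - ∑ i ∈ Aᶜ, (c * μa i - μb i) :=
      neg_mul_envyAB_add_envyBA μa μb c A
    _ ≤ ∑ i, |c * μa i - μb i| := sum_sub_sum_compl_le_sum_abs _ A

theorem exists_envy_eq_optEnvy : ∃ A : Finset (Fin m), envy μa μb A = optEnvy μa μb :=
  exists_eq_ciInf_of_finite

end Envy

theorem stmt4_general {m : ℕ} (μa μb : Fin m → ℝ) {Δ : ℝ} (hopt : optEnvy μa μb ≤ -Δ)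
    {c : ℝ} (hc : 0 ≤ c) : (1 + c) * Δ ≤ ∑ i, |c * μa i - μb i| := by
  obtain ⟨A, hA⟩ := exists_envy_eq_optEnvy μa μb
  have hΔ : Δ ≤ -envy μa μb A := le_neg_of_le_neg (hA.trans_le hopt)
  calc
    (1 + c) * Δ ≤ (1 + c) * -envy μa μb A := by gcongr
    _ = -((1 + c) * envy μa μb A) := mul_neg _ _
    _ ≤ ∑ i, |c * μa i - μb i| := neg_one_add_mul_envy_le_sum_abs μa μb hc A

/-- if `OptEnvy ≤ -Δ` then `∑ i |c μ^a_i − μ^b_i| ≥ (1+c) Δ` for all `c > 0`. -/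
theorem stmt4 {m : ℕ} (μa μb : Fin m → ℝ)
    (hμa : ∀ i, μa i ∈ Set.Icc (0 : ℝ) 1) (hμb : ∀ i, μb i ∈ Set.Icc (0 : ℝ) 1)
    (Δ : ℝ) (hΔ : 0 < Δ) (hopt : optEnvy μa μb ≤ -Δ) (c : ℝ) (hc : 0 < c) :
    (1 + c) * Δ ≤ ∑ i, |c * μa i - μb i| :=
  stmt4_general μa μb hopt hc.le
end
end

section
/- For every real z: 4 z² Q(z)(1 − Q(z)) ≤ 4/√(2eπ), and in particular 4 z² Q(z)(1 − Q(z)) ≤ 1. -/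
open Real

noncomputable section

/-- The standard Gaussian upper-tail function `Q(z) = (1/√(2π)) ∫_z^∞ e^{−x²/2} dx`. -/
def gaussQ (z : ℝ) : ℝ := (1 / Real.sqrt (2 * Real.pi)) * ∫ x in Set.Ioi z, Real.exp (-x ^ 2 / 2)

/-! Since `Q(-z) = 1 - Q(z)`, the product `Q(z)(1 - Q(z))` is at most `Q(|z|)`, so it is enough to
bound `z² Q(z)` for `z ≥ 0`. On `(z, ∞)` we have `z e^{-x²/2} ≤ x e^{-x²/2}`, and the right-hand
side has primitive `-e^{-x²/2}`; this gives the Mills bound `z Q(z) ≤ e^{-z²/2} / √(2π)`. It remains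
to note that `z e^{-z²/2}` is maximal at `z = 1`, with value `e^{-1/2}`. -/

open MeasureTheory Set Filter Topology

theorem integral_Ioi_neg_add_integral_Ioi_of_even {E : Type*} [NormedAddCommGroup E]
    [NormedSpace ℝ E] {f : ℝ → E} (hf : Integrable f) (hf_even : f.Even) (z : ℝ) :
    (∫ x in Ioi (-z), f x) + ∫ x in Ioi z, f x = ∫ x, f x := by
  have reflect : ∫ x in Ioi (-z), f x = ∫ x in Iic z, f x := by
    rw [← integral_comp_neg_Iic z f]
    exact integral_congr_ae (.of_forall hf_even)
  rw [reflect]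
  exact intervalIntegral.integral_Iic_add_Ioi hf.integrableOn hf.integrableOn

section GaussianTail

variable {b : ℝ}

theorem hasDerivAt_neg_exp_neg_mul_sq_div (hb : b ≠ 0) (x : ℝ) :
    HasDerivAt (fun y ↦ -(exp (-b * y ^ 2) / (2 * b))) (x * exp (-b * x ^ 2)) x := by
  have hexp := (((hasDerivAt_pow 2 x).const_mul (-b)).exp.div_const (2 * b)).fun_neg
  refine hexp.congr_deriv ?_
  field_simp
  norm_num [mul_comm]

theorem tendsto_exp_neg_mul_sq_atTop (hb : 0 < b) :
    Tendsto (fun x : ℝ ↦ exp (-b * x ^ 2)) atTop (𝓝 0) :=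
  tendsto_exp_atBot.comp <|
    (tendsto_pow_atTop two_ne_zero).const_mul_atTop_of_neg (neg_lt_zero.mpr hb)

theorem integral_Ioi_mul_exp_neg_mul_sq (hb : 0 < b) (z : ℝ) :
    ∫ x in Ioi z, x * exp (-b * x ^ 2) = exp (-b * z ^ 2) / (2 * b) := by
  have primitive_tendsto :
      Tendsto (fun x : ℝ ↦ -(exp (-b * x ^ 2) / (2 * b))) atTop (𝓝 0) := by
    simpa only [zero_div, neg_zero] using
      ((tendsto_exp_neg_mul_sq_atTop hb).div_const (2 * b)).neg
  rw [integral_Ioi_of_hasDerivAt_of_tendsto'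
    (fun x _ ↦ hasDerivAt_neg_exp_neg_mul_sq_div hb.ne' x)
    (integrable_mul_exp_neg_mul_sq hb).integrableOn primitive_tendsto, zero_sub, neg_neg]

theorem mul_integral_Ioi_exp_neg_mul_sq_le (hb : 0 < b) (z : ℝ) :
    z * ∫ x in Ioi z, exp (-b * x ^ 2) ≤ exp (-b * z ^ 2) / (2 * b) :=
  calc z * ∫ x in Ioi z, exp (-b * x ^ 2)
      = ∫ x in Ioi z, z * exp (-b * x ^ 2) := (integral_const_mul z _).symm
    _ ≤ ∫ x in Ioi z, x * exp (-b * x ^ 2) :=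
        setIntegral_mono_on ((integrable_exp_neg_mul_sq hb).const_mul z).integrableOn
          (integrable_mul_exp_neg_mul_sq hb).integrableOn measurableSet_Ioi
          fun _ hx ↦ mul_le_mul_of_nonneg_right (le_of_lt hx) (exp_pos _).le
    _ = exp (-b * z ^ 2) / (2 * b) := integral_Ioi_mul_exp_neg_mul_sq hb z

theorem mul_exp_neg_mul_sq_le (hb : 0 < b) (x : ℝ) :
    x * exp (-b * x ^ 2) ≤ 1 / √(2 * b * exp 1) := by
  rw [one_div, ← sqrt_inv]
  apply le_sqrt_of_sq_le
  rw [← one_div, le_div_iff₀ (by positivity)]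
  calc (x * exp (-b * x ^ 2)) ^ 2 * (2 * b * exp 1)
      = 2 * b * x ^ 2 * exp (-(2 * b * x ^ 2 - 1)) := by
        rw [mul_pow, ← exp_nat_mul,
          show -(2 * b * x ^ 2 - 1) = (2 : ℕ) * (-b * x ^ 2) + 1 by push_cast; ring, exp_add]
        ring
    _ ≤ exp (2 * b * x ^ 2 - 1) * exp (-(2 * b * x ^ 2 - 1)) := by
        gcongr
        linarith [add_one_le_exp (2 * b * x ^ 2 - 1)]
    _ = 1 := by rw [← exp_add, add_neg_cancel, exp_zero]

end GaussianTail

theorem gaussQ_eq_integral_exp_neg_mul_sq (z : ℝ) :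
    gaussQ z = (1 / √(2 * π)) * ∫ x in Ioi z, exp (-(1 / 2) * x ^ 2) := by
  simp only [gaussQ, neg_mul, one_div_mul_eq_div, neg_div]

theorem gaussQ_nonneg (z : ℝ) : 0 ≤ gaussQ z :=
  mul_nonneg (by positivity) (integral_nonneg fun _ ↦ (exp_pos _).le)

theorem gaussQ_neg (z : ℝ) : gaussQ (-z) = 1 - gaussQ z := by
  have total : (∫ x in Ioi (-z), exp (-(1 / 2) * x ^ 2)) + ∫ x in Ioi z, exp (-(1 / 2) * x ^ 2)
      = √(2 * π) := by
    rw [integral_Ioi_neg_add_integral_Ioi_of_even (integrable_exp_neg_mul_sq one_half_pos)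
      (fun x ↦ by rw [neg_sq]), integral_gaussian, div_div_eq_mul_div, div_one, mul_comm]
  rw [eq_sub_iff_add_eq, gaussQ_eq_integral_exp_neg_mul_sq, gaussQ_eq_integral_exp_neg_mul_sq,
    ← mul_add, total, one_div_mul_cancel (by positivity)]

theorem gaussQ_le_one (z : ℝ) : gaussQ z ≤ 1 :=
  sub_nonneg.mp (gaussQ_neg z ▸ gaussQ_nonneg (-z))

theorem gaussQ_mul_one_sub_le_gaussQ_abs (z : ℝ) : gaussQ z * (1 - gaussQ z) ≤ gaussQ |z| := by
  rcases abs_choice z with hz | hz <;> rw [hz]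
  · exact mul_le_of_le_one_right (gaussQ_nonneg z) (sub_le_self 1 (gaussQ_nonneg z))
  · rw [← gaussQ_neg]
    exact mul_le_of_le_one_left (gaussQ_nonneg (-z)) (gaussQ_le_one z)

theorem mul_gaussQ_le (z : ℝ) : z * gaussQ z ≤ exp (-(1 / 2) * z ^ 2) / √(2 * π) := by
  have mills := mul_integral_Ioi_exp_neg_mul_sq_le one_half_pos z
  rw [mul_one_div_cancel two_ne_zero, div_one] at mills
  rw [gaussQ_eq_integral_exp_neg_mul_sq, mul_left_comm, one_div_mul_eq_div]
  gcongr

theorem sq_mul_gaussQ_le {z : ℝ} (hz : 0 ≤ z) :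
    z ^ 2 * gaussQ z ≤ 1 / √(2 * exp 1 * π) :=
  calc z ^ 2 * gaussQ z
      = z * (z * gaussQ z) := by ring
    _ ≤ z * (exp (-(1 / 2) * z ^ 2) / √(2 * π)) := by gcongr; exact mul_gaussQ_le z
    _ = z * exp (-(1 / 2) * z ^ 2) / √(2 * π) := by ring
    _ ≤ 1 / √(2 * (1 / 2) * exp 1) / √(2 * π) := by
        gcongr
        exact mul_exp_neg_mul_sq_le one_half_pos z
    _ = 1 / √(2 * exp 1 * π) := by
        rw [div_div, ← sqrt_mul (by positivity)]
        ring_nf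

theorem four_le_sqrt_two_mul_exp_one_mul_pi : 4 ≤ √(2 * exp 1 * π) := by
  apply le_sqrt_of_sq_le
  nlinarith [exp_one_gt_d9, pi_gt_d2]

/-- `4 z² Q(z)(1 − Q(z)) ≤ 4/√(2eπ) ≤ 1` for every real `z`. -/
theorem stmt8 (z : ℝ) :
    4 * z ^ 2 * gaussQ z * (1 - gaussQ z) ≤ 4 / Real.sqrt (2 * Real.exp 1 * Real.pi) ∧
    4 * z ^ 2 * gaussQ z * (1 - gaussQ z) ≤ 1 := by
  have bound : 4 * z ^ 2 * gaussQ z * (1 - gaussQ z) ≤ 4 / √(2 * exp 1 * π) :=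
    calc 4 * z ^ 2 * gaussQ z * (1 - gaussQ z)
        = 4 * (|z| ^ 2 * (gaussQ z * (1 - gaussQ z))) := by rw [sq_abs]; ring
      _ ≤ 4 * (|z| ^ 2 * gaussQ |z|) := by
          gcongr
          exact gaussQ_mul_one_sub_le_gaussQ_abs z
      _ ≤ 4 * (1 / √(2 * exp 1 * π)) := by
          gcongr
          exact sq_mul_gaussQ_le (abs_nonneg z)
      _ = 4 / √(2 * exp 1 * π) := mul_one_div _ _
  exact ⟨bound, bound.trans
    (div_le_one_of_le₀ four_le_sqrt_two_mul_exp_one_mul_pi (sqrt_nonneg _))⟩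
end
end

section
/- Let μ^a, μ^b ∈ [0,1]^m with OptEnvy ≤ −Δ for some Δ > 0, and let q ≥ 1 satisfy q ≤ (1/2) m³/Δ². In the thresholding allocation model (with estimate variance m/q), for every c > 0 the expectation of f(c) satisfies E[f(c)] ≤ −(1/5) · m^{−3/2} · q^{1/2} · Δ². -/
open MeasureTheory ProbabilityTheory Real Filter
open scoped ENNReal NNReal Classical

noncomputable section

/-- The joint law of the `2m` independent Gaussian estimates in the thresholding allocation
model: `ω (i, true) = v^a_i ~ N(μ^a_i, m/q)` and `ω (i, false) = v^b_i ~ N(μ^b_i, m/q)`. -/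
def threshMeasure (m q : ℕ) (μa μb : Fin m → ℝ) : Measure ((Fin m × Bool) → ℝ) :=
  Measure.pi fun p => gaussianReal (if p.2 then μa p.1 else μb p.1) ((m : ℝ≥0) / (q : ℝ≥0))

/-- `x_i(c) = 1` if `c v^a_i − v^b_i > 0` and `x_i(c) = −1` otherwise. -/
def xSign {m : ℕ} (c : ℝ) (ω : (Fin m × Bool) → ℝ) (i : Fin m) : ℝ :=
  if 0 < c * ω (i, true) - ω (i, false) then 1 else -1

/-- `e_a(c) = −∑ i x_i(c) μ^a_i`. -/
def eA {m : ℕ} (μa : Fin m → ℝ) (c : ℝ) (ω : (Fin m × Bool) → ℝ) : ℝ :=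
  -∑ i, xSign c ω i * μa i

/-- `e_b(c) = ∑ i x_i(c) μ^b_i`. -/
def eB {m : ℕ} (μb : Fin m → ℝ) (c : ℝ) (ω : (Fin m × Bool) → ℝ) : ℝ :=
  ∑ i, xSign c ω i * μb i

/-- `f(c) = (c e_a(c) + e_b(c))/(1+c)`. -/
def fFun {m : ℕ} (μa μb : Fin m → ℝ) (c : ℝ) (ω : (Fin m × Bool) → ℝ) : ℝ :=
  (c * eA μa c ω + eB μb c ω) / (1 + c)

/-- `e'_a(c) = −∑ i x_i(c) v^a_i`. -/
def eA' {m : ℕ} (c : ℝ) (ω : (Fin m × Bool) → ℝ) : ℝ :=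
  -∑ i, xSign c ω i * ω (i, true)

/-- `e'_b(c) = ∑ i x_i(c) v^b_i`. -/
def eB' {m : ℕ} (c : ℝ) (ω : (Fin m × Bool) → ℝ) : ℝ :=
  ∑ i, xSign c ω i * ω (i, false)

/-
Put `d i = c * μa i - μb i`. The rule picks `x_i` as the sign of a Gaussian with mean `d i` and
standard deviation `σ * √(1 + c ^ 2) ≤ σ * (1 + c)`, where `σ = √(m / q)`, and
`f = -(∑ i, d i * x_i) / (1 + c)`. Reflecting the Gaussian about its mean shows that `|E[x_i]|`
is the mass of the interval of radius `|d i|` centred at `d i`, so `d i * E[x_i]` is at least a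
constant times the truncated square `|d i| * min |d i| (√2 * s) / s`, where `s = σ * (1 + c)`.
An optimal allocation splits the items into two groups, which forces `∑ i, |d i| ≥ (1 + c) * Δ`.
The truncated square lies above its tangent line at the average `(1 + c) * Δ / m`, provided this
average is at most half of the truncation level: that is exactly the bound on `q`.
-/

/-- The mean of the `±1`-valued sign under the law `ν`. The sign of `0` is `-1`, as in `xSign`. -/
def signMean (ν : Measure ℝ) : ℝ :=
  ∫ x, (if 0 < x then 1 else -1) ∂ν

lemma signMean_eq_sub (ν : Measure ℝ) [IsFiniteMeasure ν] :
    signMean ν = ν.real (Set.Ioi 0) - ν.real (Set.Iic 0) := by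
  have sign_eq : (fun x : ℝ => if 0 < x then (1 : ℝ) else -1) =
      fun x => (Set.Ioi 0).indicator 1 x - (Set.Iic 0).indicator 1 x := by
    funext x
    rcases lt_or_ge 0 x with hx | hx
    · simp [hx]
    · simp [hx, hx.not_gt]
  rw [signMean, sign_eq, integral_sub
    ((integrable_indicator_iff measurableSet_Ioi).2 integrableOn_const)
    ((integrable_indicator_iff measurableSet_Iic).2 integrableOn_const),
    integral_indicator_one measurableSet_Ioi, integral_indicator_one measurableSet_Iic]

lemma signMean_map_neg_le (ν : Measure ℝ) [IsFiniteMeasure ν] :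
    signMean (ν.map fun x => -x) ≤ -signMean ν := by
  have hpos : (ν.map fun x => -x).real (Set.Ioi 0) = ν.real (Set.Iio 0) := by
    rw [map_measureReal_apply measurable_neg measurableSet_Ioi]
    simp
  have hneg : (ν.map fun x => -x).real (Set.Iic 0) = ν.real (Set.Ici 0) := by
    rw [map_measureReal_apply measurable_neg measurableSet_Iic]
    simp
  have hIio : ν.real (Set.Iio 0) ≤ ν.real (Set.Iic 0) := measureReal_mono Set.Iio_subset_Iic_self
  have hIoi : ν.real (Set.Ioi 0) ≤ ν.real (Set.Ici 0) := measureReal_mono Set.Ioi_subset_Ici_self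
  rw [signMean_eq_sub, signMean_eq_sub, hpos, hneg]
  linarith

section Gaussian

variable {μ : ℝ} {v : ℝ≥0}

lemma gaussianReal_real_Iic_sub (μ : ℝ) (v : ℝ≥0) (t : ℝ) :
    (gaussianReal μ v).real (Set.Iic (μ - t)) = (gaussianReal μ v).real (Set.Ici (μ + t)) := by
  have reflect : (gaussianReal μ v).map (fun x => 2 * μ - x) = gaussianReal μ v := by
    rw [gaussianReal_map_const_sub]
    ring_nf
  conv_lhs => rw [← reflect]
  rw [map_measureReal_apply (by fun_prop) measurableSet_Iic]
  congr 1
  ext x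
  simp only [Set.mem_preimage, Set.mem_Iic, Set.mem_Ici]
  constructor <;> intro h <;> linarith

lemma signMean_gaussianReal_of_pos (hμ : 0 < μ) (v : ℝ≥0) :
    signMean (gaussianReal μ v) = (gaussianReal μ v).real (Set.Ioo (μ - μ) (μ + μ)) := by
  have hdisj : Disjoint (Set.Ioo (μ - μ) (μ + μ)) (Set.Ici (μ + μ)) :=
    Set.disjoint_left.2 fun _ hx hy => hx.2.not_ge hy
  rw [signMean_eq_sub, ← sub_self μ, ← Set.Ioo_union_Ici_eq_Ioi (by linarith : μ - μ < μ + μ),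
    measureReal_union hdisj measurableSet_Ici, gaussianReal_real_Iic_sub, add_sub_cancel_right]

lemma one_div_le_gaussianPDFReal (hv : v ≠ 0) {x : ℝ} (hx : (x - μ) ^ 2 ≤ 2 * v) :
    1 / (10 * √v) ≤ gaussianPDFReal μ v x := by
  have hv0 : (0 : ℝ) < v := by exact_mod_cast pos_iff_ne_zero.2 hv
  have hsqrt : √(2 * π * v) ≤ 3 * √v := by
    rw [Real.sqrt_mul (by positivity)]
    gcongr
    rw [Real.sqrt_le_left (by norm_num)]
    linarith [Real.pi_lt_four]
  have hexp : 3 / 10 ≤ rexp (-(x - μ) ^ 2 / (2 * v)) := calc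
    (3 / 10 : ℝ) ≤ rexp (-1) := by linarith [Real.exp_neg_one_gt_d9]
    _ ≤ rexp (-(x - μ) ^ 2 / (2 * v)) := by
      gcongr
      rw [le_div_iff₀ (mul_pos two_pos hv0)]
      linarith
  calc 1 / (10 * √v) = (3 * √v)⁻¹ * (3 / 10) := by field_simp
    _ ≤ gaussianPDFReal μ v x := by
      rw [gaussianPDFReal]
      gcongr

lemma div_le_gaussianReal_real_Ioo (hv : v ≠ 0) {r : ℝ} (hr₀ : 0 ≤ r) (hr : r ≤ √2 * √v) :
    r / (5 * √v) ≤ (gaussianReal μ v).real (Set.Ioo (μ - r) (μ + r)) := by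
  have pdf_ge : ∀ x ∈ Set.Ioo (μ - r) (μ + r), 1 / (10 * √v) ≤ gaussianPDFReal μ v x := by
    intro x hx
    refine one_div_le_gaussianPDFReal hv ?_
    calc (x - μ) ^ 2 ≤ (√2 * √v) ^ 2 :=
          sq_le_sq' (by linarith [hx.1]) (by linarith [hx.2])
      _ = 2 * v := by rw [mul_pow, Real.sq_sqrt zero_le_two, Real.sq_sqrt v.coe_nonneg]
  calc r / (5 * √v) = ∫ _ in Set.Ioo (μ - r) (μ + r), 1 / (10 * √v) := by
        rw [setIntegral_const, Real.volume_real_Ioo_of_le (by linarith), smul_eq_mul]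
        ring
    _ ≤ ∫ x in Set.Ioo (μ - r) (μ + r), gaussianPDFReal μ v x :=
        setIntegral_mono_on (integrableOn_const (by simp))
          (integrable_gaussianPDFReal μ v).integrableOn measurableSet_Ioo pdf_ge
    _ = (gaussianReal μ v).real (Set.Ioo (μ - r) (μ + r)) := by
        rw [Measure.real, gaussianReal_apply_eq_integral μ hv,
          ENNReal.toReal_ofReal (integral_nonneg (gaussianPDFReal_nonneg μ v))]

lemma min_div_le_signMean_gaussianReal (hv : v ≠ 0) (hμ : 0 < μ) :
    min μ (√2 * √v) / (5 * √v) ≤ signMean (gaussianReal μ v) := by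
  rw [signMean_gaussianReal_of_pos hμ]
  refine (div_le_gaussianReal_real_Ioo hv (by positivity) (min_le_right _ _)).trans
    (measureReal_mono (Set.Ioo_subset_Ioo ?_ ?_)) <;>
  linarith [min_le_left μ (√2 * √v)]

lemma abs_mul_min_div_le_mul_signMean_gaussianReal (hv : v ≠ 0) (μ : ℝ) :
    |μ| * (min |μ| (√2 * √v) / (5 * √v)) ≤ μ * signMean (gaussianReal μ v) := by
  rcases lt_trichotomy μ 0 with hμ | rfl | hμ
  · have hneg : signMean (gaussianReal μ v) ≤ -signMean (gaussianReal (-μ) v) := by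
      simpa [gaussianReal_map_neg] using signMean_map_neg_le (gaussianReal (-μ) v)
    rw [abs_of_neg hμ]
    calc -μ * (min (-μ) (√2 * √v) / (5 * √v))
        ≤ -μ * signMean (gaussianReal (-μ) v) :=
          mul_le_mul_of_nonneg_left (min_div_le_signMean_gaussianReal hv (neg_pos.2 hμ))
            (neg_pos.2 hμ).le
      _ = μ * -signMean (gaussianReal (-μ) v) := by ring
      _ ≤ μ * signMean (gaussianReal μ v) := mul_le_mul_of_nonpos_left hneg hμ.le
  · simp
  · rw [abs_of_pos hμ]
    exact mul_le_mul_of_nonneg_left (min_div_le_signMean_gaussianReal hv hμ) hμ.le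

lemma abs_mul_min_div_le_mul_signMean_gaussianReal_of_sqrt_le (hv : v ≠ 0) (μ : ℝ) {s : ℝ}
    (hs : √v ≤ s) :
    |μ| * min |μ| (√2 * s) / (5 * s) ≤ μ * signMean (gaussianReal μ v) := by
  have hv0 : (0 : ℝ) < √v := Real.sqrt_pos.2 (by exact_mod_cast pos_iff_ne_zero.2 hv)
  have min_div : ∀ t : ℝ, 0 < t → min |μ| (√2 * t) / (5 * t) = min (|μ| / t) √2 / 5 := by
    intro t ht
    rw [← mul_div_cancel_right₀ √2 ht.ne', min_div_div_right ht.le,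
      mul_div_cancel_right₀ √2 ht.ne', div_div, mul_comm t]
  calc |μ| * min |μ| (√2 * s) / (5 * s) = |μ| * (min (|μ| / s) √2 / 5) := by
        rw [mul_div_assoc, min_div s (hv0.trans_le hs)]
    _ ≤ |μ| * (min (|μ| / √v) √2 / 5) := by gcongr
    _ = |μ| * (min |μ| (√2 * √v) / (5 * √v)) := by rw [min_div _ hv0]
    _ ≤ μ * signMean (gaussianReal μ v) := abs_mul_min_div_le_mul_signMean_gaussianReal hv μ

lemma hasLaw_const_mul_sub_gaussianReal {Ω : Type*} {mΩ : MeasurableSpace Ω} {P : Measure Ω}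
    {X Y : Ω → ℝ} {μ₁ μ₂ : ℝ} {v₁ v₂ : ℝ≥0} (hX : HasLaw X (gaussianReal μ₁ v₁) P)
    (hY : HasLaw Y (gaussianReal μ₂ v₂) P) (hXY : IndepFun X Y P) (c : ℝ) :
    HasLaw (fun ω => c * X ω - Y ω)
      (gaussianReal (c * μ₁ - μ₂) (.mk (c ^ 2) (sq_nonneg c) * v₁ + v₂)) P where
  aemeasurable := (hX.aemeasurable.const_mul c).sub hY.aemeasurable
  map_eq := by
    have hindep : IndepFun (fun ω => c * X ω) (fun ω => -Y ω) P :=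
      hXY.comp (measurable_const_mul c) measurable_neg
    simpa only [sub_eq_add_neg, Pi.add_def] using gaussianReal_add_gaussianReal_of_indepFun hindep
      (gaussianReal_const_mul hX c).map_eq (gaussianReal_neg hY).map_eq

end Gaussian

lemma two_mul_mul_sub_sq_le_mul_min {u D τ : ℝ} (hD : 0 ≤ D) (hτ : 2 * D ≤ τ) :
    2 * D * u - D ^ 2 ≤ u * min u τ := by
  rcases le_total u τ with hu | hu
  · rw [min_eq_left hu]
    linarith [sq_nonneg (u - D)]
  · rw [min_eq_right hu]
    nlinarith [sq_nonneg D]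

lemma sq_div_card_le_sum_mul_min {ι : Type*} [Fintype ι] {u : ι → ℝ} {T τ : ℝ} (hT : 0 ≤ T)
    (hu : T ≤ ∑ i, u i) (hτ : 2 * T ≤ Fintype.card ι * τ) :
    T ^ 2 / Fintype.card ι ≤ ∑ i, u i * min (u i) τ := by
  rcases isEmpty_or_nonempty ι with _ | _
  · simp
  have hcard : (0 : ℝ) < Fintype.card ι := by exact_mod_cast Fintype.card_pos
  set D : ℝ := T / Fintype.card ι with hDdef
  have hD : 0 ≤ D := by positivity
  have hDτ : 2 * D ≤ τ := by
    rw [hDdef, ← mul_div_assoc, div_le_iff₀ hcard]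
    linarith
  calc T ^ 2 / Fintype.card ι = 2 * D * T - Fintype.card ι * D ^ 2 := by
        rw [hDdef]
        field_simp
        ring
    _ ≤ 2 * D * ∑ i, u i - Fintype.card ι * D ^ 2 := by gcongr
    _ = ∑ i, (2 * D * u i - D ^ 2) := by
        simp [Finset.sum_sub_distrib, Finset.mul_sum]
    _ ≤ ∑ i, u i * min (u i) τ :=
        Finset.sum_le_sum fun i _ => two_mul_mul_sub_sq_le_mul_min hD hDτ

lemma rpow_neg_three_halves_mul_rpow_half {x : ℝ} (hx : 0 < x) (y : ℝ) :
    x ^ (-(3 : ℝ) / 2) * y ^ ((1 : ℝ) / 2) = (x * √(x / y))⁻¹ := by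
  have hexp : -(3 : ℝ) / 2 = -(1 + 1 / 2) := by norm_num
  rw [hexp, Real.rpow_neg hx.le, Real.rpow_add hx, Real.rpow_one, ← Real.sqrt_eq_rpow,
    ← Real.sqrt_eq_rpow, Real.sqrt_div hx.le, mul_div_assoc', inv_div, div_eq_inv_mul]

section Allocation

variable {m : ℕ} (μa μb : Fin m → ℝ) (q : ℕ) {c : ℝ}

lemma one_add_mul_neg_envy_le_sum_abs (hc : 0 ≤ c) (A : Finset (Fin m)) :
    (1 + c) * -envy μa μb A ≤ ∑ i, |c * μa i - μb i| := by
  have hab : envyAB μa A ≤ envy μa μb A := le_max_left _ _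
  have hba : envyBA μb A ≤ envy μa μb A := le_max_right _ _
  calc (1 + c) * -envy μa μb A ≤ -(c * envyAB μa A + envyBA μb A) := by
        linarith [mul_le_mul_of_nonneg_left hab hc]
    _ = ∑ i ∈ A, (c * μa i - μb i) + ∑ i ∈ Aᶜ, -(c * μa i - μb i) := by
        simp only [envyAB, envyBA, Finset.sum_neg_distrib, Finset.sum_sub_distrib,
          ← Finset.mul_sum]
        ring
    _ ≤ ∑ i ∈ A, |c * μa i - μb i| + ∑ i ∈ Aᶜ, |c * μa i - μb i| := by
        gcongr
        · exact le_abs_self _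
        · exact neg_le_abs _
    _ = ∑ i, |c * μa i - μb i| := Finset.sum_add_sum_compl A _

lemma one_add_mul_neg_optEnvy_le_sum_abs (hc : 0 ≤ c) :
    (1 + c) * -optEnvy μa μb ≤ ∑ i, |c * μa i - μb i| := by
  obtain ⟨A, hA⟩ := exists_eq_ciInf_of_finite (f := envy μa μb)
  rw [optEnvy, ← hA]
  exact one_add_mul_neg_envy_le_sum_abs μa μb hc A

instance : IsProbabilityMeasure (threshMeasure m q μa μb) := by
  unfold threshMeasure
  infer_instance

lemma hasLaw_eval_threshMeasure (p : Fin m × Bool) :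
    HasLaw (fun ω => ω p) (gaussianReal (if p.2 then μa p.1 else μb p.1) (m / q))
      (threshMeasure m q μa μb) :=
  ⟨(measurable_pi_apply p).aemeasurable, (measurePreserving_eval _ p).map_eq⟩

lemma iIndepFun_eval_threshMeasure :
    iIndepFun (fun (p : Fin m × Bool) ω => ω p) (threshMeasure m q μa μb) :=
  iIndepFun_pi (X := fun _ x => x) fun _ => aemeasurable_id

variable (m c) in
/-- The variance of the decision statistic `c v^a_i − v^b_i`. -/
def statisticVariance : ℝ≥0 :=
  .mk (c ^ 2) (sq_nonneg c) * (m / q) + m / q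

lemma statisticVariance_ne_zero (hm : m ≠ 0) (hq : q ≠ 0) : statisticVariance m q c ≠ 0 := by
  have hpos : (0 : ℝ≥0) < m / q := by positivity
  exact (add_pos_of_nonneg_of_pos zero_le hpos).ne'

lemma sqrt_statisticVariance_le (hc : 0 ≤ c) :
    √(statisticVariance m q c) ≤ √(m / q) * (1 + c) := by
  have coe_eq : (statisticVariance m q c : ℝ) = m / q * (1 + c ^ 2) := by
    simp only [statisticVariance, NNReal.coe_add, NNReal.coe_mul, NNReal.coe_mk, NNReal.coe_div,
      NNReal.coe_natCast]
    ring
  rw [coe_eq, Real.sqrt_mul (by positivity)]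
  gcongr
  rw [Real.sqrt_le_left (by positivity)]
  linarith [add_sq 1 c]

lemma hasLaw_statistic (c : ℝ) (i : Fin m) :
    HasLaw (fun ω => c * ω (i, true) - ω (i, false))
      (gaussianReal (c * μa i - μb i) (statisticVariance m q c)) (threshMeasure m q μa μb) :=
  hasLaw_const_mul_sub_gaussianReal (hasLaw_eval_threshMeasure μa μb q (i, true))
    (hasLaw_eval_threshMeasure μa μb q (i, false))
    ((iIndepFun_eval_threshMeasure μa μb q).indepFun (by simp)) c

lemma measurable_xSign (c : ℝ) (i : Fin m) : Measurable fun ω => xSign c ω i :=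
  Measurable.ite (measurableSet_lt measurable_const (by fun_prop)) measurable_const
    measurable_const

lemma integrable_xSign (c : ℝ) (i : Fin m) :
    Integrable (fun ω => xSign c ω i) (threshMeasure m q μa μb) := by
  refine .of_bound (measurable_xSign c i).aestronglyMeasurable 1 (ae_of_all _ fun ω => ?_)
  unfold xSign
  split_ifs <;> simp

lemma integral_xSign (c : ℝ) (i : Fin m) :
    ∫ ω, xSign c ω i ∂threshMeasure m q μa μb =
      signMean (gaussianReal (c * μa i - μb i) (statisticVariance m q c)) :=
  (hasLaw_statistic μa μb q c i).integral_comp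
    (Measurable.ite measurableSet_Ioi measurable_const measurable_const).aestronglyMeasurable

lemma fFun_eq_neg_sum (c : ℝ) (ω : Fin m × Bool → ℝ) :
    fFun μa μb c ω = -(∑ i, (c * μa i - μb i) * xSign c ω i) / (1 + c) := by
  simp only [fFun, eA, eB, sub_mul, Finset.sum_sub_distrib, Finset.mul_sum, mul_neg,
    mul_comm (xSign _ _ _), mul_assoc]
  ring

lemma integral_fFun (c : ℝ) :
    ∫ ω, fFun μa μb c ω ∂threshMeasure m q μa μb =
      -(∑ i, (c * μa i - μb i) *
        signMean (gaussianReal (c * μa i - μb i) (statisticVariance m q c))) / (1 + c) := by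
  simp only [fFun_eq_neg_sum]
  rw [integral_div, integral_neg,
    integral_finsetSum _ fun i _ => (integrable_xSign μa μb q c i).const_mul _]
  simp only [integral_const_mul, integral_xSign]

variable {μa μb q}

lemma integral_fFun_le {Δ : ℝ} (hΔ : 0 ≤ Δ) (hopt : optEnvy μa μb ≤ -Δ) (hm : m ≠ 0) (hq : q ≠ 0)
    (hc : 0 ≤ c) (hΔσ : 2 * Δ ≤ m * (√2 * √(m / q))) :
    ∫ ω, fFun μa μb c ω ∂threshMeasure m q μa μb ≤ -(Δ ^ 2 / (5 * (m * √(m / q)))) := by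
  have hσ : 0 < √((m : ℝ) / q) := by positivity
  set σ : ℝ := √((m : ℝ) / q)
  have hsum_abs : (1 + c) * Δ ≤ ∑ i, |c * μa i - μb i| :=
    (mul_le_mul_of_nonneg_left (le_neg_of_le_neg hopt) (by positivity)).trans
      (one_add_mul_neg_optEnvy_le_sum_abs μa μb hc)
  have hthreshold : 2 * ((1 + c) * Δ) ≤ Fintype.card (Fin m) * (√2 * (σ * (1 + c))) := by
    rw [Fintype.card_fin]
    linarith [mul_le_mul_of_nonneg_left hΔσ (by positivity : 0 ≤ 1 + c)]
  rw [integral_fFun, neg_div, neg_le_neg_iff, le_div_iff₀ (by positivity)]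
  calc Δ ^ 2 / (5 * (m * σ)) * (1 + c)
      = ((1 + c) * Δ) ^ 2 / Fintype.card (Fin m) / (5 * (σ * (1 + c))) := by
        rw [Fintype.card_fin]
        field_simp
    _ ≤ (∑ i, |c * μa i - μb i| * min |c * μa i - μb i| (√2 * (σ * (1 + c)))) /
          (5 * (σ * (1 + c))) := by
        gcongr
        exact sq_div_card_le_sum_mul_min (by positivity) hsum_abs hthreshold
    _ ≤ ∑ i, (c * μa i - μb i) *
          signMean (gaussianReal (c * μa i - μb i) (statisticVariance m q c)) := by
        rw [Finset.sum_div]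
        exact Finset.sum_le_sum fun i _ =>
          abs_mul_min_div_le_mul_signMean_gaussianReal_of_sqrt_le
            (statisticVariance_ne_zero q hm hq) _ (sqrt_statisticVariance_le q hc)

end Allocation

lemma two_mul_le_mul_sqrt_of_le_div_sq {x y Δ : ℝ} (hx : 0 < x) (hy : 0 < y) (hΔ : 0 < Δ)
    (h : y ≤ 1 / 2 * x ^ 3 / Δ ^ 2) : 2 * Δ ≤ x * (√2 * √(x / y)) := by
  rw [le_div_iff₀ (by positivity)] at h
  refine le_of_sq_le_sq ?_ (by positivity)
  rw [mul_pow, mul_pow, mul_pow, Real.sq_sqrt zero_le_two, Real.sq_sqrt (by positivity),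
    ← mul_div_assoc, ← mul_div_assoc, le_div_iff₀ hy]
  linarith

theorem stmt9_general {m : ℕ} (μa μb : Fin m → ℝ)
    (Δ : ℝ) (hΔ : 0 < Δ) (hopt : optEnvy μa μb ≤ -Δ)
    (q : ℕ) (hq1 : 1 ≤ q) (hq2 : (q : ℝ) ≤ 1 / 2 * m ^ 3 / Δ ^ 2)
    (c : ℝ) (hc : 0 ≤ c) :
    ∫ ω, fFun μa μb c ω ∂(threshMeasure m q μa μb) ≤
      -(1 / 5) * (m : ℝ) ^ (-(3 : ℝ) / 2) * (q : ℝ) ^ ((1 : ℝ) / 2) * Δ ^ 2 := by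
  have hq : (0 : ℝ) < q := by exact_mod_cast hq1
  have hm : m ≠ 0 := by
    rintro rfl
    have hq_nonpos : (q : ℝ) ≤ 0 := by simpa using hq2
    linarith
  have hm' : (0 : ℝ) < m := by positivity
  calc ∫ ω, fFun μa μb c ω ∂(threshMeasure m q μa μb)
      ≤ -(Δ ^ 2 / (5 * (m * √(m / q)))) :=
        integral_fFun_le hΔ.le hopt hm (by omega) hc
          (two_mul_le_mul_sqrt_of_le_div_sq hm' hq hΔ hq2)
    _ = -(1 / 5) * (m : ℝ) ^ (-(3 : ℝ) / 2) * (q : ℝ) ^ ((1 : ℝ) / 2) * Δ ^ 2 := by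
        rw [mul_assoc (-(1 / 5) : ℝ), rpow_neg_three_halves_mul_rpow_half hm']
        field_simp

/-- in the thresholding allocation model, if `OptEnvy ≤ -Δ` and
`q ≤ (1/2) m³/Δ²`, then `E[f(c)] ≤ −(1/5) m^{−3/2} q^{1/2} Δ²` for every `c > 0`. -/
theorem stmt9 {m : ℕ} (μa μb : Fin m → ℝ)
    (hμa : ∀ i, μa i ∈ Set.Icc (0 : ℝ) 1) (hμb : ∀ i, μb i ∈ Set.Icc (0 : ℝ) 1)
    (Δ : ℝ) (hΔ : 0 < Δ) (hopt : optEnvy μa μb ≤ -Δ)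
    (q : ℕ) (hq1 : 1 ≤ q) (hq2 : (q : ℝ) ≤ 1 / 2 * m ^ 3 / Δ ^ 2)
    (c : ℝ) (hc : 0 < c) :
    ∫ ω, fFun μa μb c ω ∂(threshMeasure m q μa μb) ≤
      -(1 / 5) * (m : ℝ) ^ (-(3 : ℝ) / 2) * (q : ℝ) ^ ((1 : ℝ) / 2) * Δ ^ 2 := by
  exact stmt9_general μa μb Δ hΔ hopt q hq1 hq2 c hc.le
end
end
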